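/- Assume J ≥ J_0. There exists ℓ_0 ∈ ℕ such that for all ℓ ≥ ℓ_0 one has 2^{(1+b)^ℓ J (H−ε)} ≤ #T_∞((1+b)^ℓ J, b, ε) ≤ 2^{(1+b)^ℓ J (H+ε)}. -/

import Mathlib

open scoped Classical ENNReal
open Set Filter MeasureTheory ProbabilityTheory

noncomputable section

/-- The dyadic interval `λ_{j,k} = [k 2^{-j}, (k+1) 2^{-j}]`. -/
def dyadic (j k : ℕ) : Set ℝ := Set.Icc ((k : ℝ) / 2 ^ j) (((k : ℝ) + 1) / 2 ^ j)

/-- Indices `k` of dyadic intervals of scale `j` that intersect `I`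
(the collection `I_j`). -/
def dyadicHit (I : Set ℝ) (j : ℕ) : Finset ℕ :=
  (Finset.range (2 ^ j)).filter fun k => (dyadic j k ∩ I).Nonempty

/-- Smallest number of intervals of length `ε` needed to cover `I`. -/
def coverNum (I : Set ℝ) (ε : ℝ) : ℕ :=
  sInf {n : ℕ | ∃ f : Fin n → ℝ, I ⊆ ⋃ i, Set.Icc (f i) (f i + ε)}

/-- Upper box-counting dimension of `I`:
`limsup_{ε → 0⁺} log N(ε) / (- log ε)`. -/
def upperBoxDim (I : Set ℝ) : ℝ :=
  Filter.limsup (fun ε : ℝ => Real.log (coverNum I ε) / (-Real.log ε))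
    (nhdsWithin 0 (Set.Ioi 0))

/-- The scale `⌊(1+β) j⌋` of the children of a dyadic interval of scale `j`. -/
def childScale (β : ℝ) (j : ℕ) : ℕ := ⌊(1 + β) * (j : ℝ)⌋₊

/-- Indices `k'` of dyadic intervals of scale `j'` belonging to `I_{j'}` and contained in
the dyadic interval of index `k` at scale `j`. -/
def childrenIn (I : Set ℝ) (j j' k : ℕ) : Finset ℕ :=
  (dyadicHit I j').filter fun k' => dyadic j' k' ⊆ dyadic j k

/-- The collection `SD(j,β,ε)` of intervals of `I_j` with slow duplication rate. -/
def SD (I : Set ℝ) (H β ε : ℝ) (j : ℕ) : Finset ℕ :=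
  (dyadicHit I j).filter fun k =>
    ((childrenIn I j (childScale β j) k).card : ℝ) ≤
      (2 : ℝ) ^ ((j : ℝ) * (β * H - 4 * (max 1 β) * ε))

/-- The collection `ND(j,β,ε)` of intervals of `I_j` with normal duplication rate. -/
def ND (I : Set ℝ) (H β ε : ℝ) (j : ℕ) : Finset ℕ :=
  (dyadicHit I j).filter fun k =>
    (2 : ℝ) ^ ((j : ℝ) * (β * H - 4 * (max 1 β) * ε)) ≤
        ((childrenIn I j (childScale β j) k).card : ℝ) ∧
    ((childrenIn I j (childScale β j) k).card : ℝ) ≤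
        (2 : ℝ) ^ ((j : ℝ) * (β * H + 4 * (max 1 β) * ε))

/-- The collection `FD(j,β,ε)` of intervals of `I_j` with fast duplication rate. -/
def FD (I : Set ℝ) (H β ε : ℝ) (j : ℕ) : Finset ℕ :=
  (dyadicHit I j).filter fun k =>
    (2 : ℝ) ^ ((j : ℝ) * (β * H + 4 * (max 1 β) * ε)) ≤
      ((childrenIn I j (childScale β j) k).card : ℝ)

/-- `C_β U`: the collection of all children (at scale `⌊(1+β)J⌋`, in `I_{⌊(1+β)J⌋}`)
of the intervals of a collection `U` at scale `J`. -/
def CB (I : Set ℝ) (β : ℝ) (J : ℕ) (U : Finset ℕ) : Finset ℕ :=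
  (dyadicHit I (childScale β J)).filter fun k' =>
    ∃ k ∈ U, dyadic (childScale β J) k' ⊆ dyadic J k

/-- The nested collections `T_ℓ(J,b,ε)`: `Tset I H b ε 0 J` is `T_1(J,b,ε) = ND(J,b,ε)` and
`Tset I H b ε n J` is `T_{n+1}(J,b,ε)`, defined recursively by keeping the intervals having
at least `2^{J(bH-5ε)}` children in `T_n((1+b)J,b,ε)`. -/
def Tset (I : Set ℝ) (H b ε : ℝ) : ℕ → ℕ → Finset ℕ
  | 0, J => ND I H b ε J
  | n + 1, J =>
      (Tset I H b ε n J).filter fun k =>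
        (2 : ℝ) ^ ((J : ℝ) * (b * H - 5 * ε)) ≤
          (((Tset I H b ε n (childScale b J)).filter fun k' =>
              dyadic (childScale b J) k' ⊆ dyadic J k).card : ℝ)

/-- `T_ℓ(J,b,ε)` for `ℓ ≥ 1`. -/
def T (I : Set ℝ) (H b ε : ℝ) (ℓ J : ℕ) : Finset ℕ := Tset I H b ε (ℓ - 1) J

/-- `U_ℓ(J,b,ε) = T_{ℓ-1}(J,b,ε) \ T_ℓ(J,b,ε)` for `ℓ ≥ 2`. -/
def U (I : Set ℝ) (H b ε : ℝ) (ℓ J : ℕ) : Finset ℕ :=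
  T I H b ε (ℓ - 1) J \ T I H b ε ℓ J

/-- `T_∞(J,b,ε) = ∩_{ℓ ≥ 1} T_ℓ(J,b,ε)`. -/
def Tinf (I : Set ℝ) (H b ε : ℝ) (J : ℕ) : Finset ℕ :=
  (Tset I H b ε 0 J).filter fun k => ∀ n, k ∈ Tset I H b ε n J

/-- `U_∞(J,b,ε) = ∪_{ℓ ≥ 2} U_ℓ(J,b,ε)`. -/
def Uinf (I : Set ℝ) (H b ε : ℝ) (J : ℕ) : Finset ℕ :=
  (dyadicHit I J).filter fun k => ∃ ℓ, 2 ≤ ℓ ∧ k ∈ U I H b ε ℓ J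

/-- The union `Ũ` of the dyadic intervals (at scale `j`) of a collection `U`. -/
def tilde (j : ℕ) (U : Finset ℕ) : Set ℝ := ⋃ k ∈ U, dyadic j k

/-- The integer scale `⌊(1+b)^ℓ J⌋`. -/
def rscale (b : ℝ) (J ℓ : ℕ) : ℕ := ⌊(1 + b) ^ ℓ * (J : ℝ)⌋₊

lemma exists_outer (I : Set ℝ) (H s : ℝ) (hs : 0 < s) (hsH : s < H)
    (hdim : dimH I = ENNReal.ofReal H) :
    ∃ (ν : OuterMeasure ℝ) (j₀ : ℕ), 2 ≤ ν I ∧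
      ∀ j ≥ j₀, ∀ k, ν (dyadic j k) ≤ ENNReal.ofReal ((2 : ℝ) ^ (-((j : ℝ) * s))) := by
  have h1 : Measure.hausdorffMeasure ((s.toNNReal : NNReal) : ℝ) I = ∞ := by
    apply hausdorffMeasure_of_lt_dimH
    rw [hdim]
    exact (ENNReal.ofReal_lt_ofReal_iff (hs.trans hsH)).2 hsH
  rw [Real.coe_toNNReal _ hs.le, Measure.hausdorffMeasure, ← Measure.coe_toOuterMeasure,
    Measure.mkMetric_toOuterMeasure, OuterMeasure.mkMetric] at h1
  have h2 := OuterMeasure.mkMetric'.tendsto_pre_nat (fun A : Set ℝ => (Metric.ediam A) ^ s) I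
  rw [h1] at h2
  obtain ⟨n, hn⟩ := (h2.eventually (lt_mem_nhds (show (2 : ℝ≥0∞) < ∞ by simp))).exists
  refine ⟨_, n, hn.le, ?_⟩
  intro j hj k
  have hd : Metric.ediam (dyadic j k) = ENNReal.ofReal ((2 : ℝ) ^ (-(j : ℝ))) := by
    rw [dyadic, Real.ediam_Icc]
    congr 1
    rw [Real.rpow_neg (by norm_num), Real.rpow_natCast]
    field_simp
    ring
  refine (OuterMeasure.mkMetric'.pre_le ?_).trans ?_
  · rw [hd, Real.rpow_neg (by norm_num), Real.rpow_natCast,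
      ENNReal.ofReal_inv_of_pos (by positivity)]
    apply ENNReal.inv_le_inv.2
    rw [← ENNReal.ofReal_natCast]
    apply ENNReal.ofReal_le_ofReal
    have : n ≤ 2 ^ j := hj.trans Nat.lt_two_pow_self.le
    exact_mod_cast this
  · rw [hd, ENNReal.ofReal_rpow_of_pos (by positivity), ← Real.rpow_mul (by norm_num)]
    simp

lemma exists_child (j j' k : ℕ) (hk : k < 2 ^ j) (hjj : j ≤ j') (x : ℝ) (hx : x ∈ dyadic j k) :
    ∃ k' < 2 ^ j', x ∈ dyadic j' k' ∧ dyadic j' k' ⊆ dyadic j k := by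
  obtain ⟨d, rfl⟩ := Nat.exists_eq_add_of_le hjj
  obtain ⟨hx1, hx2⟩ := hx
  have h2j : (0 : ℝ) < 2 ^ j := by positivity
  have h2d : (0 : ℝ) < 2 ^ d := by positivity
  rw [div_le_iff₀ h2j] at hx1
  rw [le_div_iff₀ h2j] at hx2
  have key : ∃ k' : ℕ, k * 2 ^ d ≤ k' ∧ k' + 1 ≤ (k + 1) * 2 ^ d ∧
      (k' : ℝ) ≤ x * (2 ^ j * 2 ^ d) ∧ x * (2 ^ j * 2 ^ d) ≤ (k' : ℝ) + 1 := by
    have hx0 : 0 ≤ x * 2 ^ j := le_trans (by positivity) hx1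
    have hx0' : 0 ≤ x * (2 ^ j * 2 ^ d) := by rw [← mul_assoc]; positivity
    have hlo : (k : ℝ) * 2 ^ d ≤ x * (2 ^ j * 2 ^ d) := by
      rw [← mul_assoc]; gcongr
    have hhi : x * (2 ^ j * 2 ^ d) ≤ ((k : ℝ) + 1) * 2 ^ d := by
      rw [← mul_assoc]; gcongr
    by_cases hc : ⌊x * (2 ^ j * 2 ^ d)⌋₊ + 1 ≤ (k + 1) * 2 ^ d
    · refine ⟨⌊x * (2 ^ j * 2 ^ d)⌋₊, ?_, hc, Nat.floor_le hx0', (Nat.lt_floor_add_one _).le⟩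
      apply Nat.le_floor
      push_cast
      exact hlo
    · push Not at hc
      have h1 : (k + 1) * 2 ^ d ≤ ⌊x * (2 ^ j * 2 ^ d)⌋₊ := by omega
      have h2 : (((k + 1) * 2 ^ d : ℕ) : ℝ) ≤ x * (2 ^ j * 2 ^ d) :=
        (Nat.le_floor_iff hx0').1 h1
      have hp : 0 < 2 ^ d := by positivity
      have h3 : (k + 1) * 2 ^ d - 1 + 1 = (k + 1) * 2 ^ d :=
        Nat.sub_add_cancel (Nat.mul_pos (by omega) hp)
      have h4 : (((k + 1) * 2 ^ d - 1 : ℕ) : ℝ) + 1 = (k + 1) * 2 ^ d := by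
        exact_mod_cast h3
      push_cast at h2
      refine ⟨(k + 1) * 2 ^ d - 1, ?_, h3.le, ?_, ?_⟩
      · rw [add_mul]; omega
      · linarith
      · linarith
  obtain ⟨k', h1, h2, h3, h4⟩ := key
  have h1' : (k : ℝ) * 2 ^ d ≤ k' := by exact_mod_cast h1
  have h2' : (k' : ℝ) + 1 ≤ (k + 1) * 2 ^ d := by exact_mod_cast h2
  refine ⟨k', ?_, ⟨?_, ?_⟩, ?_⟩
  · have : (k + 1) * 2 ^ d ≤ 2 ^ j * 2 ^ d := Nat.mul_le_mul_right _ hk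
    rw [pow_add]; omega
  · rw [div_le_iff₀ (by positivity), pow_add]; exact h3
  · rw [le_div_iff₀ (by positivity), pow_add]; exact h4
  · apply Set.Icc_subset_Icc
    · rw [div_le_div_iff₀ (by positivity) (by positivity), pow_add]
      nlinarith
    · rw [div_le_div_iff₀ (by positivity) (by positivity), pow_add]
      nlinarith

lemma Tset_succ_sub (I : Set ℝ) (H b ε : ℝ) (n J : ℕ) :
    Tset I H b ε (n + 1) J ⊆ Tset I H b ε n J := by
  rw [Tset]; exact Finset.filter_subset _ _

lemma Tset_anti (I : Set ℝ) (H b ε : ℝ) (J : ℕ) : Antitone (fun n => Tset I H b ε n J) :=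
  antitone_nat_of_succ_le fun n => Tset_succ_sub I H b ε n J

lemma few_of_not_mem (I : Set ℝ) (H b ε : ℝ) (J k : ℕ) (hk : k ∈ ND I H b ε J) (n : ℕ)
    (hn : k ∉ Tset I H b ε (n + 1) J) :
    (((Tset I H b ε n (childScale b J)).filter fun k' =>
        dyadic (childScale b J) k' ⊆ dyadic J k).card : ℝ) ≤
      (2 : ℝ) ^ ((J : ℝ) * (b * H - 5 * ε)) := by
  by_contra hc
  push Not at hc
  apply hn
  have : ∀ m ≤ n + 1, k ∈ Tset I H b ε m J := by
    intro m
    induction m with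
    | zero => intro _; exact hk
    | succ m ih =>
      intro hm
      rw [Tset, Finset.mem_filter]
      refine ⟨ih (by omega), hc.le.trans ?_⟩
      exact_mod_cast Finset.card_le_card
        (Finset.filter_subset_filter _ (Tset_anti I H b ε _ (show m ≤ n by omega)))
  exact this _ le_rfl

/-- Part of `I` in intervals outside of `T_{n+1}`. -/
def badSet (I : Set ℝ) (H b ε : ℝ) (n J : ℕ) : Set ℝ :=
  {x | x ∈ I ∧ ∃ k ∈ dyadicHit I J, k ∉ Tset I H b ε n J ∧ x ∈ dyadic J k}

lemma cover_le (ν : OuterMeasure ℝ) (j : ℕ) (c : ℝ)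
    (hν : ∀ k, ν (dyadic j k) ≤ ENNReal.ofReal c) (F : Finset ℕ) :
    ν (⋃ k ∈ F, dyadic j k) ≤ ENNReal.ofReal (F.card * c) := by
  refine (measure_biUnion_finset_le F _).trans ?_
  refine (Finset.sum_le_card_nsmul F _ _ fun k _ => hν k).trans ?_
  rw [nsmul_eq_mul, ENNReal.ofReal_mul (by positivity), ENNReal.ofReal_natCast]

lemma childScale_ge (b : ℝ) (hb : 0 < b) (J : ℕ) : J ≤ childScale b J := by
  apply Nat.le_floor
  nlinarith [(Nat.cast_nonneg J : (0 : ℝ) ≤ J)]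

lemma hit_child (I : Set ℝ) (b : ℝ) (hb : 0 < b) (J k : ℕ) (hk : k ∈ dyadicHit I J) (x : ℝ)
    (hxI : x ∈ I) (hx : x ∈ dyadic J k) : ∃ k' ∈ dyadicHit I (childScale b J),
      x ∈ dyadic (childScale b J) k' ∧ dyadic (childScale b J) k' ⊆ dyadic J k := by
  rw [dyadicHit, Finset.mem_filter, Finset.mem_range] at hk
  obtain ⟨k', h1, h2, h3⟩ := exists_child J _ k hk.1 (childScale_ge b hb J) x hx
  refine ⟨k', ?_, h2, h3⟩
  rw [dyadicHit, Finset.mem_filter, Finset.mem_range]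
  exact ⟨h1, x, h2, hxI⟩

lemma bad_zero (I : Set ℝ) (H b ε : ℝ) (hb : 0 < b) (J : ℕ) :
    badSet I H b ε 0 J ⊆ (⋃ k ∈ FD I H b ε J, dyadic J k) ∪
      ⋃ k ∈ CB I b J (SD I H b ε J), dyadic (childScale b J) k := by
  rintro x ⟨hxI, k, hk, hkT, hx⟩
  rw [Tset, ND, Finset.mem_filter] at hkT
  by_cases hc : (2 : ℝ) ^ ((J : ℝ) * (b * H - 4 * (max 1 b) * ε)) ≤
        ((childrenIn I J (childScale b J) k).card : ℝ)
  · left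
    have : k ∈ FD I H b ε J := by
      rw [FD, Finset.mem_filter]
      refine ⟨hk, ?_⟩
      by_contra h
      exact hkT ⟨hk, hc, (not_le.1 h).le⟩
    exact Set.mem_biUnion this hx
  · right
    obtain ⟨k', h1, h2, h3⟩ := hit_child I b hb J k hk x hxI hx
    have : k' ∈ CB I b J (SD I H b ε J) := by
      rw [CB, Finset.mem_filter]
      refine ⟨h1, k, ?_, h3⟩
      rw [SD, Finset.mem_filter]
      exact ⟨hk, (not_le.1 hc).le⟩
    exact Set.mem_biUnion this h2

/-- children in `T_{n+1}` of intervals having few such children -/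
def fewSet (I : Set ℝ) (H b ε : ℝ) (n J : ℕ) : Finset ℕ :=
  ((ND I H b ε J).filter fun k => k ∉ Tset I H b ε (n + 1) J).biUnion fun k =>
    (Tset I H b ε n (childScale b J)).filter fun k' =>
        dyadic (childScale b J) k' ⊆ dyadic J k

lemma bad_succ (I : Set ℝ) (H b ε : ℝ) (hb : 0 < b) (n J : ℕ) :
    badSet I H b ε (n + 1) J ⊆ badSet I H b ε 0 J ∪
      ((⋃ k ∈ fewSet I H b ε n J, dyadic (childScale b J) k) ∪
        badSet I H b ε n (childScale b J)) := by
  rintro x ⟨hxI, k, hk, hkT, hx⟩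
  by_cases hkN : k ∈ ND I H b ε J
  · right
    obtain ⟨k', h1, h2, h3⟩ := hit_child I b hb J k hk x hxI hx
    by_cases hk' : k' ∈ Tset I H b ε n (childScale b J)
    · left
      have : k' ∈ fewSet I H b ε n J := by
        rw [fewSet, Finset.mem_biUnion]
        exact ⟨k, Finset.mem_filter.2 ⟨hkN, hkT⟩, Finset.mem_filter.2 ⟨hk', h3⟩⟩
      exact Set.mem_biUnion this h2
    · right
      exact ⟨hxI, k', h1, hk', h2⟩
  · left
    exact ⟨hxI, k, hk, hkN, hx⟩

lemma few_card (I : Set ℝ) (H b ε : ℝ) (n J : ℕ) :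
    ((fewSet I H b ε n J).card : ℝ) ≤
      (ND I H b ε J).card * (2 : ℝ) ^ ((J : ℝ) * (b * H - 5 * ε)) := by
  have h1 : ((fewSet I H b ε n J).card : ℝ) ≤
      ∑ k ∈ (ND I H b ε J).filter (fun k => k ∉ Tset I H b ε (n + 1) J),
        (2 : ℝ) ^ ((J : ℝ) * (b * H - 5 * ε)) := by
    refine le_trans (Nat.cast_le.2 Finset.card_biUnion_le) ?_
    push_cast
    apply Finset.sum_le_sum
    intro k hk
    rw [Finset.mem_filter] at hk
    exact few_of_not_mem I H b ε J k hk.1 n hk.2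
  refine h1.trans ?_
  rw [Finset.sum_const, nsmul_eq_mul]
  gcongr
  exact Finset.filter_subset _ _

lemma Tinf_eq (I : Set ℝ) (H b ε : ℝ) (J : ℕ) : ∃ n, Tset I H b ε n J ⊆ Tinf I H b ε J := by
  have h : ∀ k : ℕ, ∃ n, k ∉ Tinf I H b ε J → k ∉ Tset I H b ε n J := by
    intro k
    by_contra hc
    push Not at hc
    have := hc 0
    apply this.1
    rw [Tinf, Finset.mem_filter]
    exact ⟨this.2, fun n => (hc n).2⟩
  choose f hf using h
  refine ⟨(Tset I H b ε 0 J).sup f, fun k hk => ?_⟩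
  by_contra hc
  have h0 : k ∈ Tset I H b ε 0 J := Tset_anti I H b ε J (Nat.zero_le _) hk
  exact hf k hc (Tset_anti I H b ε J (Finset.le_sup (f := f) h0) hk)

lemma I_subset (I : Set ℝ) (hIsub : I ⊆ Set.Icc 0 1) (H b ε : ℝ) (n J : ℕ) :
    I ⊆ badSet I H b ε n J ∪ ⋃ k ∈ Tset I H b ε n J, dyadic J k := by
  intro x hx
  have h0 : x ∈ dyadic 0 0 := by simpa [dyadic] using hIsub hx
  obtain ⟨k, h1, h2, -⟩ := exists_child 0 J 0 (by norm_num) (Nat.zero_le _) x h0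
  have hk : k ∈ dyadicHit I J := by
    rw [dyadicHit, Finset.mem_filter, Finset.mem_range]
    exact ⟨h1, x, h2, hx⟩
  by_cases hT : k ∈ Tset I H b ε n J
  · right; exact Set.mem_biUnion hT h2
  · left; exact ⟨hx, k, hk, hT, h2⟩

lemma Tset_zero_scale (I : Set ℝ) (hIsub : I ⊆ Set.Icc 0 1) (hIne : I.Nonempty) (H b ε : ℝ)
    (n : ℕ) : Tset I H b ε n 0 = {0} := by
  have hc : childScale b 0 = 0 := by simp [childScale]
  have hd : dyadicHit I 0 = {0} := by
    obtain ⟨x, hx⟩ := hIne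
    have h0 : x ∈ dyadic 0 0 := by simpa [dyadic] using hIsub hx
    ext k
    rw [dyadicHit, Finset.mem_filter, Finset.mem_range, Finset.mem_singleton]
    constructor
    · intro h; simpa using h.1
    · rintro rfl; exact ⟨by norm_num, x, h0, hx⟩
  induction n with
  | zero =>
    rw [Tset, ND, hd, hc]
    ext k
    simp only [Finset.mem_filter, Finset.mem_singleton]
    constructor
    · exact fun h => h.1
    · rintro rfl
      simp [childrenIn, hd, Finset.filter_singleton]
  | succ n ih =>
    rw [Tset, hc, ih]
    ext k
    simp only [Finset.mem_filter, Finset.mem_singleton]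
    constructor
    · exact fun h => h.1
    · rintro rfl
      simp [Finset.filter_singleton]

lemma bad_bound (I : Set ℝ) (H b ε : ℝ) (hb : b ∈ Set.Ioo (0 : ℝ) 1) (hε : 0 < ε)
    (hs : 0 < H - ε / 2) (J₀ : ℕ)
    (hJ₀ : ∀ j ≥ J₀,
      ((2 : ℝ) ^ ((j : ℝ) * (H - 2 * ε)) ≤ ((ND I H b ε j).card : ℝ) ∧
        ((ND I H b ε j).card : ℝ) ≤ (2 : ℝ) ^ ((j : ℝ) * (H + ε))) ∧
      ((FD I H b ε j).card : ℝ) ≤ (2 : ℝ) ^ ((j : ℝ) * (H - 2 * ε)) ∧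
      ((CB I b j (SD I H b ε j)).card : ℝ) ≤ (2 : ℝ) ^ ((j : ℝ) * (1 + b) * (H - 3 * ε)))
    (ν : OuterMeasure ℝ) (j₀ : ℕ)
    (hν : ∀ j ≥ j₀, ∀ k, ν (dyadic j k) ≤
      ENNReal.ofReal ((2 : ℝ) ^ (-((j : ℝ) * (H - ε / 2)))))
    (K C : ℝ) (hK : K = 1 + 2 * 2 ^ (H - ε / 2)) (hC : C = K / (1 - 2 ^ (-ε))) (n : ℕ) :
    ∀ J : ℕ, J₀ ≤ J → j₀ ≤ J → 1 ≤ b * J →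
      ν (badSet I H b ε n J) ≤ ENNReal.ofReal (C * 2 ^ (-(ε * J))) := by
  obtain ⟨hb0, hb1⟩ := hb
  have h2ε : (2 : ℝ) ^ (-ε) < 1 := Real.rpow_lt_one_of_one_lt_of_neg (by norm_num) (by linarith)
  have hKpos : 0 < K := by rw [hK]; positivity
  have hCpos : 0 < C := by rw [hC]; apply div_pos hKpos; linarith
  have hCK : K + C * 2 ^ (-ε) = C := by
    have : C * (1 - 2 ^ (-ε)) = K := by rw [hC]; apply div_mul_cancel₀; linarith
    linarith
  have hKC : K ≤ C := by
    have : 0 ≤ C * 2 ^ (-ε) := by positivity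
    linarith
  set s := H - ε / 2 with hsdef
  have hchild : ∀ J : ℕ, (2 : ℝ) ^ (-((childScale b J : ℝ) * s)) ≤
      2 ^ s * 2 ^ (-((1 + b) * J * s)) := by
    intro J
    rw [← Real.rpow_add (by norm_num)]
    apply Real.rpow_le_rpow_of_exponent_le (by norm_num)
    have := (Nat.lt_floor_add_one ((1 + b) * (J : ℝ))).le
    change (1 + b) * (J : ℝ) ≤ (childScale b J : ℝ) + 1 at this
    nlinarith
  have hzero : ∀ J : ℕ, J₀ ≤ J → j₀ ≤ J →
      ν (badSet I H b ε 0 J) ≤ ENNReal.ofReal ((1 + 2 ^ s) * 2 ^ (-(ε * J))) := by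
    intro J h1 h2
    have hJnn : (0 : ℝ) ≤ J := Nat.cast_nonneg J
    have hge := childScale_ge b hb0 J
    obtain ⟨-, hFD, hCB⟩ := hJ₀ J h1
    refine (measure_mono (bad_zero I H b ε hb0 J)).trans ((measure_union_le _ _).trans ?_)
    rw [add_mul, ENNReal.ofReal_add (by positivity) (by positivity)]
    apply add_le_add
    · refine (cover_le ν J _ (hν J h2) _).trans (ENNReal.ofReal_le_ofReal ?_)
      refine (mul_le_mul_of_nonneg_right hFD (by positivity)).trans ?_
      rw [← Real.rpow_add (by norm_num), one_mul]
      apply Real.rpow_le_rpow_of_exponent_le (by norm_num)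
      rw [hsdef]
      nlinarith [mul_nonneg hJnn hε.le]
    · refine (cover_le ν _ _ (hν _ (h2.trans hge)) _).trans (ENNReal.ofReal_le_ofReal ?_)
      refine (mul_le_mul hCB (hchild J) (by positivity) (by positivity)).trans ?_
      rw [mul_left_comm, ← Real.rpow_add (by norm_num)]
      gcongr
      · norm_num
      · rw [hsdef]
        nlinarith [mul_nonneg hJnn hε.le, mul_nonneg (mul_nonneg hJnn hε.le) hb0.le]
  induction n with
  | zero =>
    intro J h1 h2 _
    refine (hzero J h1 h2).trans (ENNReal.ofReal_le_ofReal ?_)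
    gcongr
    have : (0 : ℝ) < 2 ^ s := by positivity
    linarith
  | succ n ih =>
    intro J h1 h2 h3
    have hJnn : (0 : ℝ) ≤ J := Nat.cast_nonneg J
    have hge := childScale_ge b hb0 J
    have hge1 : J + 1 ≤ childScale b J := by
      apply Nat.le_floor
      push_cast
      linarith
    have hge1' : (J : ℝ) + 1 ≤ childScale b J := by exact_mod_cast hge1
    refine (measure_mono (bad_succ I H b ε hb0 n J)).trans ((measure_union_le _ _).trans ?_)
    refine (add_le_add (hzero J h1 h2) (measure_union_le _ _)).trans ?_
    have e : C * 2 ^ (-(ε * J)) = (1 + 2 ^ s) * 2 ^ (-(ε * J)) +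
        (2 ^ s * 2 ^ (-(ε * J)) + C * 2 ^ (-(ε * (J + 1)))) := by
      have : (2 : ℝ) ^ (-(ε * (J + 1))) = 2 ^ (-ε) * 2 ^ (-(ε * J)) := by
        rw [← Real.rpow_add (by norm_num)]; congr 1; ring
      rw [this]
      conv_lhs => rw [← hCK, hK]
      ring
    rw [e, ENNReal.ofReal_add (by positivity) (by positivity),
      ENNReal.ofReal_add (by positivity) (by positivity)]
    gcongr
    · refine (cover_le ν _ _ (hν _ (h2.trans hge)) _).trans (ENNReal.ofReal_le_ofReal ?_)
      have hf : ((fewSet I H b ε n J).card : ℝ) ≤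
          2 ^ ((J : ℝ) * (H + ε)) * (2 : ℝ) ^ ((J : ℝ) * (b * H - 5 * ε)) := by
        refine (few_card I H b ε n J).trans ?_
        gcongr
        exact (hJ₀ J h1).1.2
      refine (mul_le_mul hf (hchild J) (by positivity) (by positivity)).trans ?_
      rw [mul_left_comm, ← Real.rpow_add (by norm_num), ← Real.rpow_add (by norm_num)]
      gcongr
      · norm_num
      · rw [hsdef]
        nlinarith [mul_nonneg hJnn hε.le, mul_nonneg (mul_nonneg hJnn hε.le) (sub_nonneg.2 hb1.le)]
    · refine (ih _ (h1.trans hge) (h2.trans hge) (by nlinarith)).trans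
        (ENNReal.ofReal_le_ofReal ?_)
      gcongr
      norm_num

lemma Tinf_lower (I : Set ℝ) (H : ℝ) (hIsub : I ⊆ Set.Icc 0 1)
    (hdim : dimH I = ENNReal.ofReal H)
    (b ε : ℝ) (hb : b ∈ Set.Ioo (0 : ℝ) 1) (hε : 0 < ε) (hs : 0 < H - ε / 2) (J₀ : ℕ)
    (hJ₀ : ∀ j ≥ J₀,
      ((2 : ℝ) ^ ((j : ℝ) * (H - 2 * ε)) ≤ ((ND I H b ε j).card : ℝ) ∧
        ((ND I H b ε j).card : ℝ) ≤ (2 : ℝ) ^ ((j : ℝ) * (H + ε))) ∧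
      ((FD I H b ε j).card : ℝ) ≤ (2 : ℝ) ^ ((j : ℝ) * (H - 2 * ε)) ∧
      ((CB I b j (SD I H b ε j)).card : ℝ) ≤ (2 : ℝ) ^ ((j : ℝ) * (1 + b) * (H - 3 * ε))) :
    ∃ j₁ : ℕ, ∀ j ≥ j₁, (2 : ℝ) ^ ((j : ℝ) * (H - ε / 2)) ≤ (Tinf I H b ε j).card := by
  obtain ⟨ν, j₀, hνI, hν⟩ := exists_outer I H (H - ε / 2) hs (by linarith) hdim
  set K : ℝ := 1 + 2 * 2 ^ (H - ε / 2) with hK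
  set C : ℝ := K / (1 - 2 ^ (-ε)) with hC
  have hlim : Tendsto (fun j : ℕ => C * (2 : ℝ) ^ (-(ε * j))) atTop (nhds 0) := by
    have h2ε : (2 : ℝ) ^ (-ε) < 1 :=
      Real.rpow_lt_one_of_one_lt_of_neg (by norm_num) (by linarith)
    have := (tendsto_pow_atTop_nhds_zero_of_lt_one (by positivity) h2ε).const_mul C
    rw [mul_zero] at this
    refine this.congr fun j => ?_
    rw [← Real.rpow_natCast, ← Real.rpow_mul (by norm_num), neg_mul]
  have e1 := hlim.eventually (ge_mem_nhds (show (0 : ℝ) < 1 by norm_num))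
  have e2 : ∀ᶠ j : ℕ in atTop, 1 ≤ b * (j : ℝ) :=
    (tendsto_natCast_atTop_atTop.const_mul_atTop hb.1).eventually_ge_atTop 1
  obtain ⟨j₁, hj₁⟩ := eventually_atTop.1
    (e1.and (e2.and ((eventually_ge_atTop J₀).and (eventually_ge_atTop j₀))))
  refine ⟨j₁, fun j hj => ?_⟩
  obtain ⟨h1, h2, h3, h4⟩ := hj₁ j hj
  obtain ⟨n, hn⟩ := Tinf_eq I H b ε j
  have hbad := bad_bound I H b ε hb hε hs J₀ hJ₀ ν j₀ hν K C hK hC n j h3 h4 h2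
  have htot : (2 : ℝ≥0∞) ≤ ENNReal.ofReal (1 + (Tset I H b ε n j).card *
      (2 : ℝ) ^ (-((j : ℝ) * (H - ε / 2)))) := by
    refine hνI.trans ((measure_mono (I_subset I hIsub H b ε n j)).trans
      ((measure_union_le _ _).trans ?_))
    rw [ENNReal.ofReal_add (by norm_num) (by positivity)]
    exact add_le_add (hbad.trans (ENNReal.ofReal_le_ofReal h1)) (cover_le ν j _ (hν j h4) _)
  have htot' : (2 : ℝ) ≤ 1 + (Tset I H b ε n j).card *
      (2 : ℝ) ^ (-((j : ℝ) * (H - ε / 2))) := by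
    rw [← ENNReal.ofReal_ofNat] at htot
    exact (ENNReal.ofReal_le_ofReal_iff (by positivity)).1 htot
  have hcard : ((Tset I H b ε n j).card : ℝ) ≤ (Tinf I H b ε j).card := by
    exact_mod_cast Finset.card_le_card hn
  refine le_trans ?_ hcard
  rw [Real.rpow_neg (by norm_num), ← div_eq_mul_inv] at htot'
  have : 1 ≤ ((Tset I H b ε n j).card : ℝ) / (2 : ℝ) ^ ((j : ℝ) * (H - ε / 2)) := by linarith
  rwa [le_div_iff₀ (by positivity), one_mul] at this

/-- there is `ℓ₀` such that for all `ℓ ≥ ℓ₀`,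
`2^{(1+b)^ℓ J (H-ε)} ≤ #T_∞((1+b)^ℓ J,b,ε) ≤ 2^{(1+b)^ℓ J (H+ε)}`. -/
theorem card_Tinf_bounds
    (I : Set ℝ) (H : ℝ) (hIc : IsCompact I) (hIsub : I ⊆ Set.Icc 0 1) (hIne : I.Nonempty)
    (hHpos : 0 < H) (hdim : dimH I = ENNReal.ofReal H) (hbox : upperBoxDim I = H)
    (b ε : ℝ) (hb : b ∈ Set.Ioo (0 : ℝ) 1) (hε : 0 < ε) (hbH : 0 < b * H - 5 * ε)
    (J₀ : ℕ)
    (hJ₀ : ∀ j ≥ J₀,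
      ((2 : ℝ) ^ ((j : ℝ) * (H - 2 * ε)) ≤ ((ND I H b ε j).card : ℝ) ∧
        ((ND I H b ε j).card : ℝ) ≤ (2 : ℝ) ^ ((j : ℝ) * (H + ε))) ∧
      ((FD I H b ε j).card : ℝ) ≤ (2 : ℝ) ^ ((j : ℝ) * (H - 2 * ε)) ∧
      ((CB I b j (SD I H b ε j)).card : ℝ) ≤ (2 : ℝ) ^ ((j : ℝ) * (1 + b) * (H - 3 * ε)))
    (J : ℕ) (hJ : J₀ ≤ J) :
    ∃ ℓ₀ : ℕ, ∀ ℓ ≥ ℓ₀,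
      (2 : ℝ) ^ ((1 + b) ^ ℓ * (J : ℝ) * (H - ε)) ≤
          ((Tinf I H b ε (rscale b J ℓ)).card : ℝ) ∧
      ((Tinf I H b ε (rscale b J ℓ)).card : ℝ) ≤
          (2 : ℝ) ^ ((1 + b) ^ ℓ * (J : ℝ) * (H + ε)) := by
  have hHε : 5 * ε < H := by nlinarith [hb.1, hb.2]
  have hs : 0 < H - ε / 2 := by linarith
  have hb0 := hb.1
  have hge : ∀ ℓ, J ≤ rscale b J ℓ := by
    intro ℓ
    apply Nat.le_floor
    have : (1 : ℝ) ≤ (1 + b) ^ ℓ := one_le_pow₀ (by linarith)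
    nlinarith [(Nat.cast_nonneg J : (0 : ℝ) ≤ J)]
  have hle : ∀ ℓ, (rscale b J ℓ : ℝ) ≤ (1 + b) ^ ℓ * (J : ℝ) := fun ℓ =>
    Nat.floor_le (by positivity)
  have hupper : ∀ ℓ, ((Tinf I H b ε (rscale b J ℓ)).card : ℝ) ≤
      (2 : ℝ) ^ ((1 + b) ^ ℓ * (J : ℝ) * (H + ε)) := by
    intro ℓ
    have h1 : ((Tinf I H b ε (rscale b J ℓ)).card : ℝ) ≤
        (ND I H b ε (rscale b J ℓ)).card := by
      exact_mod_cast Finset.card_le_card (Finset.filter_subset _ _)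
    refine h1.trans ((hJ₀ _ (hJ.trans (hge ℓ))).1.2.trans ?_)
    apply Real.rpow_le_rpow_of_exponent_le (by norm_num)
    have := hle ℓ
    gcongr
  rcases Nat.eq_zero_or_pos J with hJ0 | hJpos
  · refine ⟨0, fun ℓ _ => ⟨?_, hupper ℓ⟩⟩
    have hr : rscale b J ℓ = 0 := by simp [rscale, hJ0]
    have hT : Tinf I H b ε 0 = {0} := by
      rw [Tinf]
      simp [Tset_zero_scale I hIsub hIne]
    rw [hr, hT, hJ0]
    simp
  · obtain ⟨j₁, hj₁⟩ := Tinf_lower I H hIsub hdim b ε hb hε hs J₀ hJ₀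
    have hJr : (0 : ℝ) < J := by exact_mod_cast hJpos
    have hlim : Tendsto (fun ℓ : ℕ => (1 + b) ^ ℓ * (J : ℝ)) atTop atTop :=
      (tendsto_pow_atTop_atTop_of_one_lt (by linarith)).atTop_mul_const hJr
    obtain ⟨ℓ₀, hℓ₀⟩ := eventually_atTop.1
      ((hlim.eventually_ge_atTop (j₁ : ℝ)).and
        (hlim.eventually_ge_atTop (2 * (H - ε / 2) / ε)))
    refine ⟨ℓ₀, fun ℓ hℓ => ⟨?_, hupper ℓ⟩⟩
    obtain ⟨h1, h2⟩ := hℓ₀ ℓ hℓ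
    refine le_trans ?_ (hj₁ _ (Nat.le_floor h1))
    apply Real.rpow_le_rpow_of_exponent_le (by norm_num)
    have h3 : (1 + b) ^ ℓ * (J : ℝ) ≤ (rscale b J ℓ : ℝ) + 1 := (Nat.lt_floor_add_one _).le
    rw [div_le_iff₀ hε] at h2
    nlinarith
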